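/- Let 𝚫 = (Δ,R) be a gentle quiver. Then Σ_{𝒪 ∈ 𝒩/ℤ ⊔ 𝒞/ℤ} p(𝒪) = 2|Δ₀| − |Δ₁| and Σ_{𝒪 ∈ 𝒩/ℤ ⊔ 𝒞/ℤ} q(𝒪) = |Δ₁|. -/

import Mathlib

/-! Common formalization infrastructure for gentle quivers (Bobinski–Buan,
    "Derived equivalence classification of gentle cluster tilted algebras"). -/

/-- A (finite) quiver with (length-two, monomial) relations.  Vertices and
arrows are natural numbers; `V` and `A` are the finite sets of vertices and
arrows, `src`/`tgt` give the start and terminus of each arrow, and `rel` is the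
set of relations, a relation `(a, b)` standing for the length-two path
`a·b` (so `src a = tgt b`). -/
structure QuivRel where
  V : Finset ℕ
  A : Finset ℕ
  src : ℕ → ℕ
  tgt : ℕ → ℕ
  rel : Finset (ℕ × ℕ)

namespace GentleQuiv

/-- Two vertices are adjacent if some arrow joins them (in either direction). -/
def Adj (Q : QuivRel) (x y : ℕ) : Prop :=
  ∃ a ∈ Q.A, (Q.src a = x ∧ Q.tgt a = y) ∨ (Q.src a = y ∧ Q.tgt a = x)

/-- A quiver is connected if any two of its vertices are joined by a walk. -/
def Connected (Q : QuivRel) : Prop :=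
  ∀ x ∈ Q.V, ∀ y ∈ Q.V, Relation.ReflTransGen (Adj Q) x y

/-- `l = [α₁, …, αₙ]` is a (nonempty) path in the quiver: consecutive arrows
compose, i.e. `s αᵢ = t αᵢ₊₁`. -/
def IsPathList (Q : QuivRel) (l : List ℕ) : Prop :=
  l ≠ [] ∧ (∀ a ∈ l, a ∈ Q.A) ∧ l.Chain' (fun a b => Q.src a = Q.tgt b)

/-- The path `l` contains a subpath (two consecutive arrows) lying in `R`. -/
def HasRelSubpath (Q : QuivRel) (l : List ℕ) : Prop :=
  ∃ a b, (a, b) ∈ Q.rel ∧ [a, b] <:+: l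

/-- Gentle quiver: connected, relations are composable pairs of arrows, at most
two arrows in/out of every vertex, the usual gentleness conditions on
relations, and a global bound forcing finite dimensionality. -/
def IsGentle (Q : QuivRel) : Prop :=
  Q.V.Nonempty ∧
  (∀ a ∈ Q.A, Q.src a ∈ Q.V ∧ Q.tgt a ∈ Q.V) ∧
  Connected Q ∧
  (∀ ρ ∈ Q.rel, ρ.1 ∈ Q.A ∧ ρ.2 ∈ Q.A ∧ Q.src ρ.1 = Q.tgt ρ.2) ∧
  (∀ x, (Q.A.filter fun a => Q.src a = x).card ≤ 2) ∧
  (∀ x, (Q.A.filter fun a => Q.tgt a = x).card ≤ 2) ∧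
  (∀ a ∈ Q.A, (Q.A.filter fun b => Q.src b = Q.tgt a ∧ (b, a) ∉ Q.rel).card ≤ 1) ∧
  (∀ a ∈ Q.A, (Q.A.filter fun c => Q.tgt c = Q.src a ∧ (a, c) ∉ Q.rel).card ≤ 1) ∧
  (∀ a ∈ Q.A, (Q.A.filter fun b => (b, a) ∈ Q.rel).card ≤ 1) ∧
  (∀ a ∈ Q.A, (Q.A.filter fun c => (a, c) ∈ Q.rel).card ≤ 1) ∧
  (∃ n : ℕ, ∀ l : List ℕ, IsPathList Q l → l.length = n → HasRelSubpath Q l)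

/-- A choice of functions `σ, τ : Δ₁ → {±1}` as in Avella-Alaminos–Geiss. -/
structure SigmaTau (Q : QuivRel) where
  σ : ℕ → ℤ
  τ : ℕ → ℤ
  σ_pm : ∀ a ∈ Q.A, σ a = 1 ∨ σ a = -1
  τ_pm : ∀ a ∈ Q.A, τ a = 1 ∨ τ a = -1
  σ_src : ∀ a ∈ Q.A, ∀ b ∈ Q.A, a ≠ b → Q.src a = Q.src b → σ a = -σ b
  τ_tgt : ∀ a ∈ Q.A, ∀ b ∈ Q.A, a ≠ b → Q.tgt a = Q.tgt b → τ a = -τ b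
  rel_iff : ∀ a ∈ Q.A, ∀ b ∈ Q.A, Q.src a = Q.tgt b → ((a, b) ∈ Q.rel ↔ σ a = τ b)

/-- A thread: either a trivial path/antipath `1_{x,ε}` at a vertex `x` with a
sign `ε`, or a sequence of arrows of positive length. -/
inductive Thread where
  | triv (x : ℕ) (ε : ℤ) : Thread
  | arrows (l : List ℕ) : Thread
deriving DecidableEq

/-- Source of a thread. -/
def Thread.source (Q : QuivRel) : Thread → ℕ
  | .triv x _ => x
  | .arrows l => Q.src l.getLast!

/-- Target of a thread. -/
def Thread.target (Q : QuivRel) : Thread → ℕ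
  | .triv x _ => x
  | .arrows l => Q.tgt l.head!

/-- `σω` (for paths and antipaths alike; `σ 1_{x,ε} = ε = σ 1'_{x,ε}`). -/
def Thread.sigma {Q : QuivRel} (st : SigmaTau Q) : Thread → ℤ
  | .triv _ ε => ε
  | .arrows l => st.σ l.getLast!

/-- `τω` when `ω` is regarded as a path (`τ 1_{x,ε} = -ε`). -/
def Thread.tauPath {Q : QuivRel} (st : SigmaTau Q) : Thread → ℤ
  | .triv _ ε => -ε
  | .arrows l => st.τ l.head!

/-- `τω` when `ω` is regarded as an antipath (`τ 1'_{x,ε} = ε`). -/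
def Thread.tauAnti {Q : QuivRel} (st : SigmaTau Q) : Thread → ℤ
  | .triv _ ε => ε
  | .arrows l => st.τ l.head!

/-- Length of a thread. -/
def Thread.len : Thread → ℕ
  | .triv _ _ => 0
  | .arrows l => l.length

/-- A path in `𝚫` of positive length (no two consecutive arrows in `R`). -/
def IsPermList (Q : QuivRel) (l : List ℕ) : Prop :=
  IsPathList Q l ∧ l.Chain' (fun a b => (a, b) ∉ Q.rel)

/-- An antipath in `𝚫` of positive length (all consecutive pairs in `R`). -/
def IsAntiList (Q : QuivRel) (l : List ℕ) : Prop :=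
  l ≠ [] ∧ (∀ a ∈ l, a ∈ Q.A) ∧ l.Chain' (fun a b => (a, b) ∈ Q.rel)

/-- A thread is a path in `𝚫` (including trivial ones). -/
def IsPathThread (Q : QuivRel) : Thread → Prop
  | .triv x ε => x ∈ Q.V ∧ (ε = 1 ∨ ε = -1)
  | .arrows l => IsPermList Q l

/-- A thread is an antipath in `𝚫` (including trivial ones). -/
def IsAntiThread (Q : QuivRel) : Thread → Prop
  | .triv x ε => x ∈ Q.V ∧ (ε = 1 ∨ ε = -1)
  | .arrows l => IsAntiList Q l

/-- `w ∈ ℳ`: `w` is a maximal path of `𝚫`. -/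
def InM (Q : QuivRel) (st : SigmaTau Q) (w : Thread) : Prop :=
  IsPathThread Q w ∧
  (¬ ∃ a ∈ Q.A, Q.src a = w.target Q ∧ st.σ a = -(w.tauPath st)) ∧
  (¬ ∃ b ∈ Q.A, Q.tgt b = w.source Q ∧ st.τ b = -(w.sigma st))

/-- `w ∈ 𝒩`: `w` is a maximal antipath of `𝚫`. -/
def InN (Q : QuivRel) (st : SigmaTau Q) (w : Thread) : Prop :=
  IsAntiThread Q w ∧
  (¬ ∃ a ∈ Q.A, Q.src a = w.target Q ∧ st.σ a = w.tauAnti st) ∧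
  (¬ ∃ b ∈ Q.A, Q.tgt b = w.source Q ∧ st.τ b = w.sigma st)

/-- The graph of the bijection `Φ = φ ∘ ψ : 𝒩 → 𝒩`:  `PhiRel Q st w w'` holds
iff `w, w' ∈ 𝒩` and the maximal path `ψ w` (with `s(ψw) = sw`, `σ(ψw) = -σw`)
satisfies `t w' = t (ψ w)` and `τ w' = -τ(ψ w)`, i.e. `w' = φ (ψ w) = Φ w`. -/
def PhiRel (Q : QuivRel) (st : SigmaTau Q) (w w' : Thread) : Prop :=
  InN Q st w ∧ InN Q st w' ∧
  ∃ m : Thread, InM Q st m ∧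
    m.source Q = w.source Q ∧ m.sigma st = -(w.sigma st) ∧
    w'.target Q = m.target Q ∧ w'.tauAnti st = -(m.tauPath st)

/-- `O` is an orbit of the `ℤ`-action on `𝒩` induced by `Φ`. -/
def NOrbit (Q : QuivRel) (st : SigmaTau Q) (O : Set Thread) : Prop :=
  ∃ w, InN Q st w ∧ O = {w' | Relation.EqvGen (PhiRel Q st) w w'}

/-- `p(𝒪) = |𝒪|` for an orbit `𝒪 ∈ 𝒩/ℤ`. -/
noncomputable def pN (O : Set Thread) : ℕ := O.ncard

/-- `q(𝒪) = Σ_{ω ∈ 𝒪} ℓ(ω)` for an orbit `𝒪 ∈ 𝒩/ℤ`. -/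
noncomputable def qN (O : Set Thread) : ℕ := ∑ᶠ w ∈ O, Thread.len w

/-- `a ∈ 𝒞`: the arrow `a` occurs in no maximal antipath. -/
def InC (Q : QuivRel) (st : SigmaTau Q) (a : ℕ) : Prop :=
  a ∈ Q.A ∧ ¬ ∃ l : List ℕ, InN Q st (.arrows l) ∧ a ∈ l

/-- The graph of the bijection `Ψ : 𝒞 → 𝒞`. -/
def PsiRel (Q : QuivRel) (st : SigmaTau Q) (a b : ℕ) : Prop :=
  InC Q st a ∧ InC Q st b ∧ Q.tgt b = Q.src a ∧ st.τ b = st.σ a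

/-- `O` is an orbit of the `ℤ`-action on `𝒞` induced by `Ψ`. -/
def COrbit (Q : QuivRel) (st : SigmaTau Q) (O : Set ℕ) : Prop :=
  ∃ a, InC Q st a ∧ O = {b | Relation.EqvGen (PsiRel Q st) a b}

/-- The Avella-Alaminos–Geiss invariant `f_𝚫 : ℕ² → ℕ`:  `f_𝚫 (p,q)` counts the
orbits `𝒪 ∈ 𝒩/ℤ ⊔ 𝒞/ℤ` with `p(𝒪) = p` and `q(𝒪) = q`. -/
noncomputable def fInv (Q : QuivRel) (st : SigmaTau Q) : ℕ × ℕ → ℕ := fun pq =>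
  {O : Set Thread | NOrbit Q st O ∧ pN O = pq.1 ∧ qN O = pq.2}.ncard +
  {O : Set ℕ | COrbit Q st O ∧ pq.1 = 0 ∧ O.ncard = pq.2}.ncard

/-- `[p, q] : ℕ² → ℕ`, the characteristic function of `{(p, q)}`. -/
def charFn (p q : ℕ) : ℕ × ℕ → ℕ := fun pq => if pq = (p, q) then 1 else 0

/-- Tree type: `|Δ₀| = |Δ₁| + 1`. -/
def TreeType (Q : QuivRel) : Prop := Q.V.card = Q.A.card + 1

/-- Removing a set of arrows (keeping all vertices); relations containing a
removed arrow are discarded. -/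
def deleteArrows (Q : QuivRel) (S : Finset ℕ) : QuivRel where
  V := Q.V
  A := Q.A \ S
  src := Q.src
  tgt := Q.tgt
  rel := Q.rel.filter fun ρ => ρ.1 ∉ S ∧ ρ.2 ∉ S

/-- Branch arrow: removing it disconnects the quiver. -/
def BranchArrow (Q : QuivRel) (a : ℕ) : Prop :=
  a ∈ Q.A ∧ ¬ Connected (deleteArrows Q {a})

/-- Cycle arrow: removing it leaves the quiver connected. -/
def CycleArrow (Q : QuivRel) (a : ℕ) : Prop :=
  a ∈ Q.A ∧ Connected (deleteArrows Q {a})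

/-- Branch relation: a relation one of whose arrows is a branch arrow. -/
def BranchRel (Q : QuivRel) (ρ : ℕ × ℕ) : Prop :=
  ρ ∈ Q.rel ∧ (BranchArrow Q ρ.1 ∨ BranchArrow Q ρ.2)

/-- A relation `ρ = (α, β)` is isolated if the antipath `(α, β)` is a maximal
antipath, i.e. `ρ ∈ 𝒩`. -/
def Isolated (Q : QuivRel) (st : SigmaTau Q) (ρ : ℕ × ℕ) : Prop :=
  ρ ∈ Q.rel ∧ InN Q st (.arrows [ρ.1, ρ.2])

/-- `Q'` is obtained from `Q` by completing the relations from `R₀`, the new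
arrow attached to `ρ ∈ R₀` being `γ ρ`. -/
structure IsCompletion (Q : QuivRel) (R0 : Finset (ℕ × ℕ)) (γ : ℕ × ℕ → ℕ)
    (Q' : QuivRel) : Prop where
  subset : R0 ⊆ Q.rel
  fresh : ∀ ρ ∈ R0, γ ρ ∉ Q.A
  inj : ∀ ρ ∈ R0, ∀ ρ' ∈ R0, γ ρ = γ ρ' → ρ = ρ'
  V_eq : Q'.V = Q.V
  A_eq : Q'.A = Q.A ∪ R0.image γ
  src_old : ∀ a ∈ Q.A, Q'.src a = Q.src a
  tgt_old : ∀ a ∈ Q.A, Q'.tgt a = Q.tgt a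
  src_new : ∀ ρ ∈ R0, Q'.src (γ ρ) = Q.tgt ρ.1
  tgt_new : ∀ ρ ∈ R0, Q'.tgt (γ ρ) = Q.src ρ.2
  rel_eq : Q'.rel = Q.rel ∪ R0.image (fun ρ => (γ ρ, ρ.1)) ∪
      R0.image (fun ρ => (ρ.2, γ ρ))

/-- A 3-cycle: three pairwise distinct arrows forming an oriented cycle. -/
def Is3Cycle (Q : QuivRel) (a0 a1 a2 : ℕ) : Prop :=
  a0 ∈ Q.A ∧ a1 ∈ Q.A ∧ a2 ∈ Q.A ∧ a0 ≠ a1 ∧ a1 ≠ a2 ∧ a0 ≠ a2 ∧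
  Q.src a0 = Q.tgt a1 ∧ Q.src a1 = Q.tgt a2 ∧ Q.src a2 = Q.tgt a0

/-- A triangle: a 3-cycle all of whose three compositions are relations. -/
def IsTriangleTriple (Q : QuivRel) (a0 a1 a2 : ℕ) : Prop :=
  Is3Cycle Q a0 a1 a2 ∧ (a0, a1) ∈ Q.rel ∧ (a1, a2) ∈ Q.rel ∧ (a2, a0) ∈ Q.rel

/-- The (unordered) set of arrows of a triangle. -/
def TriangleSet (Q : QuivRel) (O : Finset ℕ) : Prop :=
  ∃ a0 a1 a2, O = {a0, a1, a2} ∧ IsTriangleTriple Q a0 a1 a2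

/-- Branch triangle: removing any two of its arrows disconnects the quiver. -/
def BranchTriangle (Q : QuivRel) (O : Finset ℕ) : Prop :=
  TriangleSet Q O ∧ ∀ S ⊆ O, S.card = 2 → ¬ Connected (deleteArrows Q S)

/-- Free relation: a relation neither of whose arrows lies in `𝒞`. -/
def FreeRel (Q : QuivRel) (st : SigmaTau Q) (ρ : ℕ × ℕ) : Prop :=
  ρ ∈ Q.rel ∧ ¬ InC Q st ρ.1 ∧ ¬ InC Q st ρ.2

/-- The class `𝒜`: gentle quivers with `f_𝚫 = m·[0,3] + [p+m+2, p]`. -/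
def ClassA (Q : QuivRel) (st : SigmaTau Q) : Prop :=
  IsGentle Q ∧ ∃ m p : ℕ, ∀ x, fInv Q st x = m * charFn 0 3 x + charFn (p + m + 2) p x

/-- The class `Ã`: gentle quivers with
`f_𝚫 = (m₁+m₂)·[0,3] + [p+m₁, p] + [q+m₂, q]`, `p+m₁ > 0`, `q+m₂ > 0`. -/
def ClassAtilde (Q : QuivRel) (st : SigmaTau Q) : Prop :=
  IsGentle Q ∧ ∃ m1 m2 p q : ℕ, 0 < p + m1 ∧ 0 < q + m2 ∧
    ∀ x, fInv Q st x =
      (m1 + m2) * charFn 0 3 x + charFn (p + m1) p x + charFn (q + m2) q x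

/-- Isomorphism of quivers with relations. -/
def IsoQR (Q Q' : QuivRel) : Prop :=
  ∃ fV fA : ℕ → ℕ,
    Set.BijOn fV ↑Q.V ↑Q'.V ∧ Set.BijOn fA ↑Q.A ↑Q'.A ∧
    (∀ a ∈ Q.A, Q'.src (fA a) = fV (Q.src a) ∧ Q'.tgt (fA a) = fV (Q.tgt a)) ∧
    (∀ a ∈ Q.A, ∀ b ∈ Q.A, ((a, b) ∈ Q.rel ↔ (fA a, fA b) ∈ Q'.rel))

/-- The quiver has no loops. -/
def NoLoops (Q : QuivRel) : Prop := ∀ a ∈ Q.A, Q.src a ≠ Q.tgt a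

/-- The reflection at `x` is defined: every arrow starting at `x` admits a
(necessarily unique) companion arrow ending at `x` not bound by a relation. -/
def CanReflect (Q : QuivRel) (x : ℕ) : Prop :=
  x ∈ Q.V ∧ ∀ a ∈ Q.A, Q.src a = x → ∃ b ∈ Q.A, Q.tgt b = x ∧ (a, b) ∉ Q.rel

/-- `Q'` is the reflection of the gentle loop-free quiver `Q` at the vertex
`x`, following Brenner–Butler tilting. -/
def IsReflection (Q : QuivRel) (x : ℕ) (Q' : QuivRel) : Prop :=
  IsGentle Q ∧ NoLoops Q ∧ CanReflect Q x ∧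
  Q'.V = Q.V ∧ Q'.A = Q.A ∧
  (∀ a ∈ Q.A, Q.tgt a = x → Q'.src a = x ∧ Q'.tgt a = Q.src a) ∧
  (∀ a ∈ Q.A, Q.src a = x →
    ∀ b ∈ Q.A, Q.tgt b = x → (a, b) ∉ Q.rel → Q'.src a = Q.src b) ∧
  (∀ a ∈ Q.A, Q.tgt a ≠ x → Q.src a ≠ x → Q'.src a = Q.src a) ∧
  (∀ a ∈ Q.A, Q.tgt a ≠ x →
    ((∃ b ∈ Q.A, Q.tgt b = x ∧ Q.src b = Q.tgt a ∧ (b, a) ∈ Q.rel) → Q'.tgt a = x) ∧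
    ((¬ ∃ b ∈ Q.A, Q.tgt b = x ∧ Q.src b = Q.tgt a ∧ (b, a) ∈ Q.rel) →
      Q'.tgt a = Q.tgt a)) ∧
  (∀ a b : ℕ, (a, b) ∈ Q'.rel ↔
    (((a, b) ∈ Q.rel ∧ Q.tgt a ≠ x ∧ Q.src a ≠ x) ∨
     (a ∈ Q.A ∧ b ∈ Q.A ∧ Q.src a = x ∧ Q.tgt b = x ∧ (a, b) ∉ Q.rel) ∨
     (a ∈ Q.A ∧ b ∈ Q.A ∧ Q.tgt a = x ∧
       ∃ c ∈ Q.A, c ≠ a ∧ Q.tgt c = x ∧ Q.src c = Q.tgt b ∧ (c, b) ∈ Q.rel)))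

/-- The opposite quiver with relations. -/
def opQR (Q : QuivRel) : QuivRel where
  V := Q.V
  A := Q.A
  src := Q.tgt
  tgt := Q.src
  rel := Q.rel.image fun ρ => (ρ.2, ρ.1)

/-- Coreflection: the dual of reflection. -/
def IsCoreflection (Q : QuivRel) (x : ℕ) (Q' : QuivRel) : Prop :=
  IsReflection (opQR Q) x (opQR Q')

/-- One step of reflection equivalence: a reflection, a coreflection, or an
isomorphism of quivers with relations. -/
def RefStep (Q Q' : QuivRel) : Prop :=
  (∃ x, IsReflection Q x Q') ∨ (∃ x, IsCoreflection Q x Q') ∨ IsoQR Q Q'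

/-- Reflection equivalence: a finite sequence of reflections/coreflections,
up to isomorphism of quivers with relations. -/
def RefEquiv : QuivRel → QuivRel → Prop := Relation.ReflTransGen RefStep

/-- A cyclic orientation of a `1`-cycle quiver without branch arrows (i.e. a
cycle): enumerations of the vertices and arrows by `ZMod n` such that the
`i`-th arrow joins the `i`-th and `(i+1)`-st vertices. -/
structure CyclicOrientation (Q : QuivRel) (n : ℕ) where
  ev : ZMod n → ℕ
  ea : ZMod n → ℕ
  ev_mem : ∀ i, ev i ∈ Q.V
  ea_mem : ∀ i, ea i ∈ Q.A
  ev_inj : Function.Injective ev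
  ea_inj : Function.Injective ea
  ev_surj : ∀ v ∈ Q.V, ∃ i, ev i = v
  ea_surj : ∀ a ∈ Q.A, ∃ i, ea i = a
  compat : ∀ i : ZMod n,
    (Q.src (ea i) = ev i ∧ Q.tgt (ea i) = ev (i + 1)) ∨
    (Q.src (ea i) = ev (i + 1) ∧ Q.tgt (ea i) = ev i)

/-- Clockwise arrow with respect to a cyclic orientation. -/
def Clockwise (Q : QuivRel) {n : ℕ} (co : CyclicOrientation Q n) (a : ℕ) : Prop :=
  a ∈ Q.A ∧ ∃ i : ZMod n, co.ea i = a ∧ Q.src a = co.ev i ∧ Q.tgt a = co.ev (i + 1)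

/-- Anticlockwise arrow with respect to a cyclic orientation. -/
def Anticlockwise (Q : QuivRel) {n : ℕ} (co : CyclicOrientation Q n) (a : ℕ) : Prop :=
  a ∈ Q.A ∧ ∃ i : ZMod n, co.ea i = a ∧ Q.src a = co.ev (i + 1) ∧ Q.tgt a = co.ev i

end GentleQuiv

/-!
Every arrow `a` marks two signed vertices, `(s a, σ a)` and `(t a, τ a)`, and `(a, b)` is a relation
exactly when the first mark of `a` is the second mark of `b`. Both markings are injective, so the
relations form a partial injection on the arrows.

A maximal antipath is determined by its signed target, and the signed vertices so obtained are
those not of the form `(s a, σ a)`: such a signed vertex is either `(t b, τ b)` for an arrow `b`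
which cannot be extended on the target side, or it carries a trivial maximal antipath. Hence
`|𝒩| = 2|Δ₀| - |Δ₁|`.

The maximal antipaths of positive length are the maximal chains of the partial injection. They are
duplicate-free and pairwise disjoint, and the arrows they miss form `𝒞`, so their lengths add up to
`|Δ₁| - |𝒞|`. Both sums over orbits are sums over `𝒩` and `𝒞` because orbits partition these sets.
-/

namespace GentleQuiv

section Chains

variable {α : Type*} {R : α → α → Prop} {l s s' : List α} {a b : α}

/-- A chain of `R` that cannot be prolonged at its end; the empty chain counts as terminal. -/
structure IsTerminalChain (R : α → α → Prop) (l : List α) : Prop where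
  isChain : l.IsChain R
  not_rel_getLast : ∀ a ∈ l.getLast?, ∀ b, ¬ R a b

/-- A chain of `R` that cannot be prolonged at either end: the abstract form of a maximal antipath
of positive length. -/
structure IsMaximalChain (R : α → α → Prop) (l : List α) : Prop extends IsTerminalChain R l where
  not_rel_head : ∀ a ∈ l.head?, ∀ b, ¬ R b a

theorem isTerminalChain_singleton : IsTerminalChain R [a] ↔ ∀ b, ¬ R a b :=
  ⟨fun h => h.not_rel_getLast a rfl, fun h => ⟨.singleton a, by simpa using h⟩⟩

theorem isTerminalChain_cons_cons :
    IsTerminalChain R (a :: b :: l) ↔ R a b ∧ IsTerminalChain R (b :: l) := by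
  constructor
  · rintro ⟨hchain, hlast⟩
    obtain ⟨hab, hchain⟩ := List.isChain_cons_cons.1 hchain
    exact ⟨hab, hchain, by simpa only [List.getLast?_cons_cons] using hlast⟩
  · rintro ⟨hab, hchain, hlast⟩
    exact ⟨List.isChain_cons_cons.2 ⟨hab, hchain⟩,
      by simpa only [List.getLast?_cons_cons] using hlast⟩

theorem IsTerminalChain.suffix (h : IsTerminalChain R l) (hs : s <:+ l) : IsTerminalChain R s := by
  refine ⟨h.isChain.suffix hs, fun a ha => h.not_rel_getLast a ?_⟩
  obtain ⟨p, rfl⟩ := hs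
  exact List.mem_getLast?_append_of_mem_getLast? ha

theorem IsTerminalChain.tail_unique (hR : Relator.RightUnique R)
    (h : IsTerminalChain R (a :: s)) (h' : IsTerminalChain R (a :: s')) : s = s' := by
  induction s generalizing a s' with
  | nil =>
    cases s' with
    | nil => rfl
    | cons c t' =>
      exact absurd (isTerminalChain_cons_cons.1 h').1 (isTerminalChain_singleton.1 h c)
  | cons b t ih =>
    obtain ⟨hab, hb⟩ := isTerminalChain_cons_cons.1 h
    cases s' with
    | nil => exact absurd hab (isTerminalChain_singleton.1 h' b)
    | cons c t' =>
      obtain ⟨hac, hc⟩ := isTerminalChain_cons_cons.1 h'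
      obtain rfl := hR hab hac
      rw [ih hb hc]

theorem IsTerminalChain.nodup (hR : Relator.RightUnique R) (h : IsTerminalChain R l) :
    l.Nodup := by
  induction l with
  | nil => exact List.nodup_nil
  | cons a t ih =>
    refine List.nodup_cons.2 ⟨fun ha => ?_, ih (h.suffix (List.suffix_cons a t))⟩
    -- A second occurrence of `a` would start a shorter terminal chain at `a`.
    obtain ⟨p, s, rfl⟩ := List.append_of_mem ha
    have hs : IsTerminalChain R (a :: s) := h.suffix ⟨a :: p, rfl⟩
    have hlen := congrArg List.length (h.tail_unique hR hs)
    simp only [List.length_append, List.length_cons] at hlen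
    omega

theorem isTerminalChain_flip_reverse (hchain : l.IsChain R)
    (hhead : ∀ a ∈ l.head?, ∀ b, ¬ R b a) : IsTerminalChain (flip R) l.reverse :=
  ⟨List.isChain_reverse.2 hchain, fun a ha => hhead a (by rwa [List.getLast?_reverse] at ha)⟩

theorem IsMaximalChain.eq_of_mem (hR : Relator.BiUnique R) (h : IsMaximalChain R l)
    {l' : List α} (h' : IsMaximalChain R l') (ha : a ∈ l) (ha' : a ∈ l') : l = l' := by
  obtain ⟨p, s, rfl⟩ := List.append_of_mem ha
  obtain ⟨p', s', rfl⟩ := List.append_of_mem ha'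
  have hs : s = s' := (h.suffix ⟨p, rfl⟩).tail_unique hR.2 (h'.suffix ⟨p', rfl⟩)
  have hsuffix (p s : List α) : a :: p.reverse <:+ (p ++ a :: s).reverse := ⟨s.reverse, by simp⟩
  have hrev := isTerminalChain_flip_reverse h.isChain h.not_rel_head
  have hrev' := isTerminalChain_flip_reverse h'.isChain h'.not_rel_head
  have hp : p.reverse = p'.reverse :=
    (hrev.suffix (hsuffix p s)).tail_unique hR.1.flip (hrev'.suffix (hsuffix p' s'))
  rw [hs, List.reverse_injective hp]

theorem exists_isTerminalChain_cons (n : ℕ) (hn : ∀ l, (b :: l).IsChain R → l.length ≤ n) :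
    ∃ l, IsTerminalChain R (b :: l) := by
  induction n generalizing b with
  | zero =>
    exact ⟨[], isTerminalChain_singleton.2 fun c hbc =>
      absurd (hn [c] (List.isChain_cons_cons.2 ⟨hbc, .singleton c⟩)) (by simp)⟩
  | succ n ih =>
    by_cases hb : ∃ c, R b c
    · obtain ⟨c, hbc⟩ := hb
      obtain ⟨l, hl⟩ := ih fun l hl =>
        Nat.le_of_succ_le_succ (hn (c :: l) (List.isChain_cons_cons.2 ⟨hbc, hl⟩))
      exact ⟨c :: l, isTerminalChain_cons_cons.2 ⟨hbc, hl⟩⟩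
    · exact ⟨[], isTerminalChain_singleton.2 (not_exists.1 hb)⟩

theorem mem_of_isChain_cons {A : Set α} (hA : ∀ a b, R a b → b ∈ A) (hb : b ∈ A)
    (hl : (b :: l).IsChain R) : ∀ a ∈ b :: l, a ∈ A :=
  hl.induction (· ∈ A) _ (fun x y hxy _ => hA x y hxy) fun _ => hb

theorem exists_isMaximalChain_cons (hR : Relator.LeftUnique R) (A : Finset α)
    (hA : ∀ a b, R a b → b ∈ A) (hb : b ∈ A) (hhead : ∀ a, ¬ R a b) :
    ∃ l, IsMaximalChain R (b :: l) := by
  have hhead' (l : List α) : ∀ a ∈ (b :: l).head?, ∀ c, ¬ R c a := by simpa using hhead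
  have hbound (l : List α) (hl : (b :: l).IsChain R) : l.length ≤ A.card := by
    have hnodup : (b :: l).Nodup := List.nodup_reverse.1 <|
      (isTerminalChain_flip_reverse hl (hhead' l)).nodup hR.flip
    have hsub : b :: l ⊆ A.toList := fun a ha =>
      Finset.mem_toList.2 (mem_of_isChain_cons (A := A) hA hb hl a ha)
    calc l.length ≤ (b :: l).length := Nat.le_succ _
      _ ≤ A.toList.length := (hnodup.subperm hsub).length_le
      _ = A.card := A.length_toList
  obtain ⟨l, hl⟩ := exists_isTerminalChain_cons A.card hbound
  exact ⟨l, hl, hhead' l⟩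

end Chains

section EquivalenceClasses

variable {α : Type*} {r : α → α → Prop} {S : Set α}

theorem mem_iff_mem_of_eqvGen (hr : ∀ a b, r a b → (a ∈ S ↔ b ∈ S)) {a b : α}
    (h : Relation.EqvGen r a b) : a ∈ S ↔ b ∈ S := by
  induction h with
  | rel a b h => exact hr a b h
  | refl => rfl
  | symm _ _ _ ih => exact ih.symm
  | trans _ _ _ _ _ ih ih' => exact ih.trans ih'

theorem pairwiseDisjoint_eqvGen_classes :
    {O | ∃ a ∈ S, O = {b | Relation.EqvGen r a b}}.PairwiseDisjoint id := by
  refine (Setoid.isPartition_classes (Relation.EqvGen.setoid r)).pairwiseDisjoint.subset ?_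
  rintro _ ⟨a, -, rfl⟩
  exact ⟨a, Set.ext fun b => ⟨.symm a b, .symm b a⟩⟩

theorem finsum_mem_eqvGen_classes {M : Type*} [AddCommMonoid M] (hS : S.Finite)
    (hr : ∀ a b, r a b → (a ∈ S ↔ b ∈ S)) (f : α → M) :
    ∑ᶠ O ∈ {O | ∃ a ∈ S, O = {b | Relation.EqvGen r a b}}, ∑ᶠ b ∈ O, f b = ∑ᶠ b ∈ S, f b := by
  set T : Set (Set α) := {O | ∃ a ∈ S, O = {b | Relation.EqvGen r a b}}
  have hsub : ∀ O ∈ T, O ⊆ S := by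
    rintro _ ⟨a, ha, rfl⟩ b hb
    exact (mem_iff_mem_of_eqvGen hr hb).1 ha
  have hunion : ⋃₀ T = S :=
    (Set.sUnion_subset hsub).antisymm fun a ha => ⟨_, ⟨a, ha, rfl⟩, .refl a⟩
  rw [← finsum_mem_sUnion pairwiseDisjoint_eqvGen_classes (hS.finite_subsets.subset hsub)
    fun O hO => hS.subset (hsub O hO), hunion]

theorem finsum_mem_ncard_eqvGen_classes (hS : S.Finite)
    (hr : ∀ a b, r a b → (a ∈ S ↔ b ∈ S)) :
    ∑ᶠ O ∈ {O | ∃ a ∈ S, O = {b | Relation.EqvGen r a b}}, O.ncard = S.ncard := by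
  simpa only [finsum_one] using finsum_mem_eqvGen_classes hS hr fun _ => (1 : ℕ)

end EquivalenceClasses

/-- The arrows of `Q` join vertices of `Q` and its relations are paths of length two, so that the
raw data `Q` form a quiver with relations. -/
structure IsWellFormed (Q : QuivRel) : Prop where
  src_mem : ∀ a ∈ Q.A, Q.src a ∈ Q.V
  tgt_mem : ∀ a ∈ Q.A, Q.tgt a ∈ Q.V
  rel_composable : ∀ ρ ∈ Q.rel, ρ.1 ∈ Q.A ∧ ρ.2 ∈ Q.A ∧ Q.src ρ.1 = Q.tgt ρ.2

theorem IsGentle.isWellFormed {Q : QuivRel} (hQ : IsGentle Q) : IsWellFormed Q :=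
  ⟨fun a ha => (hQ.2.1 a ha).1, fun a ha => (hQ.2.1 a ha).2, hQ.2.2.2.1⟩

/-- The relations of `Q` as a binary relation on arrows, so that antipaths are its chains. -/
abbrev Bound (Q : QuivRel) (a b : ℕ) : Prop := (a, b) ∈ Q.rel

section SignedVertices

variable {Q : QuivRel}

/-- The start of an arrow together with its sign `σ`. -/
def signedSrc (st : SigmaTau Q) (a : ℕ) : ℕ × ℤ := (Q.src a, st.σ a)

/-- The terminus of an arrow together with its sign `τ`. -/
def signedTgt (st : SigmaTau Q) (a : ℕ) : ℕ × ℤ := (Q.tgt a, st.τ a)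

/-- The pairs of a vertex and a sign, which index the trivial antipaths. -/
def signedVertices (Q : QuivRel) : Finset (ℕ × ℤ) := Q.V ×ˢ {1, -1}

theorem mem_signedVertices {x : ℕ} {ε : ℤ} :
    (x, ε) ∈ signedVertices Q ↔ x ∈ Q.V ∧ (ε = 1 ∨ ε = -1) := by
  simp only [signedVertices, Finset.mem_product, Finset.mem_insert, Finset.mem_singleton]

theorem card_signedVertices (Q : QuivRel) : (signedVertices Q).card = 2 * Q.V.card := by
  rw [signedVertices, Finset.card_product, mul_comm]
  rfl

theorem signedSrc_injOn (st : SigmaTau Q) : Set.InjOn (signedSrc st) Q.A := by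
  intro a ha b hb h
  obtain ⟨hsrc, hσ⟩ := Prod.mk.inj h
  by_contra hne
  have hneg := st.σ_src a ha b hb hne hsrc
  rcases st.σ_pm a ha with h1 | h1 <;> omega

theorem signedTgt_injOn (st : SigmaTau Q) : Set.InjOn (signedTgt st) Q.A := by
  intro a ha b hb h
  obtain ⟨htgt, hτ⟩ := Prod.mk.inj h
  by_contra hne
  have hneg := st.τ_tgt a ha b hb hne htgt
  rcases st.τ_pm a ha with h1 | h1 <;> omega

theorem bound_iff (hQ : IsWellFormed Q) (st : SigmaTau Q) {a b : ℕ} :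
    Bound Q a b ↔ a ∈ Q.A ∧ b ∈ Q.A ∧ signedSrc st a = signedTgt st b := by
  simp only [signedSrc, signedTgt, Prod.mk.injEq]
  constructor
  · intro h
    obtain ⟨ha, hb, hab⟩ := hQ.rel_composable _ h
    exact ⟨ha, hb, hab, (st.rel_iff a ha b hb hab).1 h⟩
  · rintro ⟨ha, hb, hab, hστ⟩
    exact (st.rel_iff a ha b hb hab).2 hστ

theorem bound_biUnique (hQ : IsWellFormed Q) (st : SigmaTau Q) : Relator.BiUnique (Bound Q) := by
  constructor
  · intro a b c hac hbc
    obtain ⟨ha, -, hac⟩ := (bound_iff hQ st).1 hac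
    obtain ⟨hb, -, hbc⟩ := (bound_iff hQ st).1 hbc
    exact signedSrc_injOn st ha hb (hac.trans hbc.symm)
  · intro a b c hab hac
    obtain ⟨-, hb, hab⟩ := (bound_iff hQ st).1 hab
    obtain ⟨-, hc, hac⟩ := (bound_iff hQ st).1 hac
    exact signedTgt_injOn st hb hc (hab.symm.trans hac)

end SignedVertices

section MaximalAntipaths

variable {Q : QuivRel}

theorem inN_arrows_iff (hQ : IsWellFormed Q) (st : SigmaTau Q) {l : List ℕ} :
    InN Q st (.arrows l) ↔ l ≠ [] ∧ (∀ a ∈ l, a ∈ Q.A) ∧ IsMaximalChain (Bound Q) l := by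
  rcases eq_or_ne l [] with rfl | hl
  · simp [InN, IsAntiThread, IsAntiList]
  have hhead : l.head? = some l.head! := by
    rw [List.head!_eq_head?_getD, List.head?_eq_some_head hl, Option.getD_some]
  have hlast : l.getLast? = some l.getLast! := by
    rw [List.getLast!_eq_getLast?_getD, List.getLast?_eq_some_getLast hl, Option.getD_some]
  constructor
  · rintro ⟨⟨-, hA, hchain⟩, hmaxhead, hmaxlast⟩
    refine ⟨hl, hA, ⟨hchain, ?_⟩, ?_⟩
    · rintro a ha b hab
      obtain rfl := Option.mem_unique hlast ha
      obtain ⟨-, hb, h⟩ := (bound_iff hQ st).1 hab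
      obtain ⟨h1, h2⟩ := Prod.mk.inj h
      exact hmaxlast ⟨b, hb, h1.symm, h2.symm⟩
    · rintro a ha b hba
      obtain rfl := Option.mem_unique hhead ha
      obtain ⟨hb, -, h⟩ := (bound_iff hQ st).1 hba
      obtain ⟨h1, h2⟩ := Prod.mk.inj h
      exact hmaxhead ⟨b, hb, h1, h2⟩
  · rintro ⟨-, hA, hmax⟩
    refine ⟨⟨hl, hA, hmax.isChain⟩, ?_, ?_⟩
    · rintro ⟨b, hb, h1, h2⟩
      exact hmax.not_rel_head _ hhead b <|
        (bound_iff hQ st).2 ⟨hb, hA _ (List.mem_of_mem_head? hhead), Prod.ext h1 h2⟩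
    · rintro ⟨b, hb, h1, h2⟩
      exact hmax.not_rel_getLast _ hlast b <|
        (bound_iff hQ st).2 ⟨hA _ (List.mem_of_getLast? hlast), hb, Prod.ext h1.symm h2.symm⟩

/-- The target of an antipath together with its sign `τ`, which identifies it in `𝒩`. -/
def Thread.signedTarget (st : SigmaTau Q) (w : Thread) : ℕ × ℤ := (w.target Q, w.tauAnti st)

theorem exists_eq_cons_of_inN_arrows {st : SigmaTau Q} {l : List ℕ} (h : InN Q st (.arrows l)) :
    ∃ a ∈ Q.A, ∃ t, l = a :: t := by
  obtain ⟨a, t, rfl⟩ := List.exists_cons_of_ne_nil h.1.1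
  exact ⟨a, h.1.2.1 a List.mem_cons_self, t, rfl⟩

theorem exists_eq_arrows_cons_of_signedTarget_eq {st : SigmaTau Q} {w : Thread} {b : ℕ}
    (hw : InN Q st w) (hb : b ∈ Q.A) (h : w.signedTarget st = signedTgt st b) :
    ∃ t, w = .arrows (b :: t) := by
  cases w with
  | triv x ε =>
    obtain ⟨h1, h2⟩ := Prod.mk.inj h
    exact absurd ⟨b, hb, h1.symm, h2.symm⟩ hw.2.2
  | arrows l =>
    obtain ⟨a, ha, t, rfl⟩ := exists_eq_cons_of_inN_arrows hw
    obtain rfl : a = b := signedTgt_injOn st ha hb h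
    exact ⟨t, rfl⟩

theorem eq_of_inN_arrows_of_mem (hQ : IsWellFormed Q) {st : SigmaTau Q} {l l' : List ℕ} {a : ℕ}
    (h : InN Q st (.arrows l)) (h' : InN Q st (.arrows l')) (ha : a ∈ l) (ha' : a ∈ l') :
    l = l' :=
  ((inN_arrows_iff hQ st).1 h).2.2.eq_of_mem (bound_biUnique hQ st)
    ((inN_arrows_iff hQ st).1 h').2.2 ha ha'

theorem signedTarget_injOn (hQ : IsWellFormed Q) (st : SigmaTau Q) :
    Set.InjOn (Thread.signedTarget st) {w | InN Q st w} := by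
  have arrows_case {l : List ℕ} {w : Thread} (hl : InN Q st (.arrows l)) (hw : InN Q st w)
      (h : w.signedTarget st = (Thread.arrows l).signedTarget st) : w = .arrows l := by
    obtain ⟨a, ha, t, rfl⟩ := exists_eq_cons_of_inN_arrows hl
    obtain ⟨t', rfl⟩ := exists_eq_arrows_cons_of_signedTarget_eq hw ha h
    rw [eq_of_inN_arrows_of_mem hQ hw hl List.mem_cons_self List.mem_cons_self]
  intro w hw w' hw' h
  match w, w' with
  | .triv x ε, .triv y δ => exact congrArg (fun p : ℕ × ℤ => Thread.triv p.1 p.2) h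
  | w, .arrows l => exact arrows_case hw' hw h
  | .arrows l, w' => exact (arrows_case hw hw' h.symm).symm

theorem signedTarget_mem_signedVertices (hQ : IsWellFormed Q) {st : SigmaTau Q} {w : Thread}
    (hw : InN Q st w) : w.signedTarget st ∈ signedVertices Q := by
  cases w with
  | triv x ε => exact mem_signedVertices.2 hw.1
  | arrows l =>
    obtain ⟨a, ha, t, rfl⟩ := exists_eq_cons_of_inN_arrows hw
    exact mem_signedVertices.2 ⟨hQ.tgt_mem a ha, st.τ_pm a ha⟩

theorem exists_inN_arrows_cons (hQ : IsWellFormed Q) (st : SigmaTau Q) {b : ℕ} (hb : b ∈ Q.A)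
    (hhead : signedTgt st b ∉ Q.A.image (signedSrc st)) : ∃ t, InN Q st (.arrows (b :: t)) := by
  have htail (a c : ℕ) (h : Bound Q a c) : c ∈ Q.A := ((bound_iff hQ st).1 h).2.1
  have hhead' (a : ℕ) (h : Bound Q a b) : False := by
    obtain ⟨ha, -, hab⟩ := (bound_iff hQ st).1 h
    exact hhead (Finset.mem_image.2 ⟨a, ha, hab⟩)
  obtain ⟨t, ht⟩ := exists_isMaximalChain_cons (bound_biUnique hQ st).1 Q.A htail hb hhead'
  exact ⟨t, (inN_arrows_iff hQ st).2
    ⟨List.cons_ne_nil b t, mem_of_isChain_cons (A := Q.A) htail hb ht.isChain, ht⟩⟩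

theorem image_signedTarget (hQ : IsWellFormed Q) (st : SigmaTau Q) :
    Thread.signedTarget st '' {w | InN Q st w} =
      ↑(signedVertices Q \ Q.A.image (signedSrc st)) := by
  ext ⟨x, ε⟩
  rw [Finset.mem_coe, Finset.mem_sdiff]
  constructor
  · rintro ⟨w, hw, h⟩
    rw [← h]
    refine ⟨signedTarget_mem_signedVertices hQ hw, fun hmem => hw.2.1 ?_⟩
    obtain ⟨a, ha, haw⟩ := Finset.mem_image.1 hmem
    exact ⟨a, ha, Prod.mk.inj haw⟩
  · rintro ⟨hxε, hfree⟩
    by_cases hb : ∃ b ∈ Q.A, signedTgt st b = (x, ε)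
    · obtain ⟨b, hb, hbx⟩ := hb
      obtain ⟨t, ht⟩ := exists_inN_arrows_cons hQ st hb (hbx ▸ hfree)
      exact ⟨.arrows (b :: t), ht, hbx⟩
    · refine ⟨.triv x ε, ⟨mem_signedVertices.1 hxε, ?_, ?_⟩, rfl⟩
      · rintro ⟨a, ha, h1, h2⟩
        exact hfree (Finset.mem_image.2 ⟨a, ha, Prod.ext h1 h2⟩)
      · rintro ⟨b, hbA, h1, h2⟩
        exact hb ⟨b, hbA, Prod.ext h1 h2⟩

theorem finite_inN (hQ : IsWellFormed Q) (st : SigmaTau Q) : {w | InN Q st w}.Finite :=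
  .of_finite_image (image_signedTarget hQ st ▸ Finset.finite_toSet _) (signedTarget_injOn hQ st)

theorem ncard_inN_add_card_arrows (hQ : IsWellFormed Q) (st : SigmaTau Q) :
    {w | InN Q st w}.ncard + Q.A.card = 2 * Q.V.card := by
  have hsub : Q.A.image (signedSrc st) ⊆ signedVertices Q := Finset.image_subset_iff.2 fun a ha =>
    mem_signedVertices.2 ⟨hQ.src_mem a ha, st.σ_pm a ha⟩
  rw [← (signedTarget_injOn hQ st).ncard_image, image_signedTarget hQ st, Set.ncard_coe_finset,
    ← Finset.card_image_of_injOn (signedSrc_injOn st), Finset.card_sdiff_add_card_eq_card hsub,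
    card_signedVertices]

end MaximalAntipaths

section Lengths

variable {Q : QuivRel}

/-- The set of arrows occurring in a thread. -/
def Thread.support : Thread → Finset ℕ
  | .triv _ _ => ∅
  | .arrows l => l.toFinset

theorem Thread.mem_support {w : Thread} {a : ℕ} :
    a ∈ w.support ↔ ∃ l, w = .arrows l ∧ a ∈ l := by
  cases w with
  | triv x ε => simp [Thread.support]
  | arrows l => simp [Thread.support]

theorem card_support_of_inN (hQ : IsWellFormed Q) {st : SigmaTau Q} {w : Thread}
    (hw : InN Q st w) : w.support.card = w.len := by
  cases w with
  | triv x ε => rfl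
  | arrows l =>
    have hmax : IsMaximalChain (Bound Q) l := ((inN_arrows_iff hQ st).1 hw).2.2
    exact List.toFinset_card_of_nodup (hmax.nodup (bound_biUnique hQ st).2)

theorem pairwiseDisjoint_support (hQ : IsWellFormed Q) (st : SigmaTau Q) :
    {w | InN Q st w}.PairwiseDisjoint Thread.support := by
  refine fun w hw w' hw' hne => Finset.disjoint_left.2 fun a ha ha' => hne ?_
  obtain ⟨l, rfl, hl⟩ := Thread.mem_support.1 ha
  obtain ⟨l', rfl, hl'⟩ := Thread.mem_support.1 ha'
  rw [eq_of_inN_arrows_of_mem hQ hw hw' hl hl']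

theorem support_subset_of_inN {st : SigmaTau Q} {w : Thread} (hw : InN Q st w) :
    w.support ⊆ Q.A := by
  intro a ha
  obtain ⟨l, rfl, hl⟩ := Thread.mem_support.1 ha
  exact hw.1.2.1 a hl

theorem inC_iff {st : SigmaTau Q} {a : ℕ} :
    InC Q st a ↔ a ∈ Q.A ∧ ¬ ∃ w, InN Q st w ∧ a ∈ w.support := by
  refine and_congr_right fun _ => not_congr ⟨?_, ?_⟩
  · rintro ⟨l, hl, ha⟩
    exact ⟨.arrows l, hl, Thread.mem_support.2 ⟨l, rfl, ha⟩⟩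
  · rintro ⟨w, hw, ha⟩
    obtain ⟨l, rfl, hl⟩ := Thread.mem_support.1 ha
    exact ⟨l, hw, hl⟩

theorem finite_inC (st : SigmaTau Q) : {a | InC Q st a}.Finite :=
  Q.A.finite_toSet.subset fun _ ha => ha.1

theorem finsum_len_add_ncard_inC (hQ : IsWellFormed Q) (st : SigmaTau Q) :
    (∑ᶠ w ∈ {w | InN Q st w}, w.len) + {a | InC Q st a}.ncard = Q.A.card := by
  set N : Finset Thread := (finite_inN hQ st).toFinset
  have mem_N {w : Thread} : w ∈ N ↔ InN Q st w := Set.Finite.mem_toFinset _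
  have hlen : ∑ᶠ w ∈ {w | InN Q st w}, w.len = (N.biUnion Thread.support).card := by
    rw [finsum_mem_eq_finite_toFinset_sum _ (finite_inN hQ st), Finset.card_biUnion]
    · exact Finset.sum_congr rfl fun w hw => (card_support_of_inN hQ (mem_N.1 hw)).symm
    · exact fun w hw w' hw' => pairwiseDisjoint_support hQ st (mem_N.1 hw) (mem_N.1 hw')
  have hC : {a | InC Q st a} = ↑(Q.A \ N.biUnion Thread.support) := by
    ext a
    rw [Finset.mem_coe, Finset.mem_sdiff, Finset.mem_biUnion]
    simp only [mem_N]
    exact inC_iff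
  have hsub : N.biUnion Thread.support ⊆ Q.A :=
    Finset.biUnion_subset.2 fun w hw => support_subset_of_inN (mem_N.1 hw)
  rw [hlen, hC, Set.ncard_coe_finset, add_comm, Finset.card_sdiff_add_card_eq_card hsub]

end Lengths

theorem stmt0_general (Q : QuivRel) (hQ : IsWellFormed Q) (st : SigmaTau Q) :
    (((∑ᶠ O ∈ {O : Set Thread | NOrbit Q st O}, pN O) +
        (∑ᶠ O ∈ {O : Set ℕ | COrbit Q st O}, (0 : ℕ))) + Q.A.card
      = 2 * Q.V.card) ∧
    ((∑ᶠ O ∈ {O : Set Thread | NOrbit Q st O}, qN O) +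
        (∑ᶠ O ∈ {O : Set ℕ | COrbit Q st O}, O.ncard)
      = Q.A.card) := by
  have hΦ (w w' : Thread) (h : PhiRel Q st w w') :
      w ∈ {w | InN Q st w} ↔ w' ∈ {w | InN Q st w} := iff_of_true h.1 h.2.1
  have hΨ (a b : ℕ) (h : PsiRel Q st a b) :
      a ∈ {a | InC Q st a} ↔ b ∈ {a | InC Q st a} := iff_of_true h.1 h.2.1
  have hp : ∑ᶠ O ∈ {O | NOrbit Q st O}, pN O = {w | InN Q st w}.ncard :=
    finsum_mem_ncard_eqvGen_classes (finite_inN hQ st) hΦ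
  have hq : ∑ᶠ O ∈ {O | NOrbit Q st O}, qN O = ∑ᶠ w ∈ {w | InN Q st w}, w.len :=
    finsum_mem_eqvGen_classes (finite_inN hQ st) hΦ Thread.len
  have hC : ∑ᶠ O ∈ {O | COrbit Q st O}, O.ncard = {a | InC Q st a}.ncard :=
    finsum_mem_ncard_eqvGen_classes (finite_inC st) hΨ
  rw [finsum_mem_zero, add_zero, hp, hq, hC]
  exact ⟨ncard_inN_add_card_arrows hQ st, finsum_len_add_ncard_inC hQ st⟩

/-- For a gentle quiver `𝚫`,
`Σ_{𝒪 ∈ 𝒩/ℤ ⊔ 𝒞/ℤ} p(𝒪) = 2|Δ₀| - |Δ₁|` and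
`Σ_{𝒪 ∈ 𝒩/ℤ ⊔ 𝒞/ℤ} q(𝒪) = |Δ₁|` (the first equality is stated additively to
avoid truncated subtraction). -/
theorem stmt0 (Q : QuivRel) (hQ : IsGentle Q) (st : SigmaTau Q) :
    (((∑ᶠ O ∈ {O : Set Thread | NOrbit Q st O}, pN O) +
        (∑ᶠ O ∈ {O : Set ℕ | COrbit Q st O}, (0 : ℕ))) + Q.A.card
      = 2 * Q.V.card) ∧
    ((∑ᶠ O ∈ {O : Set Thread | NOrbit Q st O}, qN O) +
        (∑ᶠ O ∈ {O : Set ℕ | COrbit Q st O}, O.ncard)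
      = Q.A.card) :=
  stmt0_general Q hQ.isWellFormed st

end GentleQuiv
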